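/- arXiv:1708.01052 — 2 statements merged into one kernel-verified Lean document; each statement's English description precedes it below -/
import Mathlib

section
/- Let p, q ∈ ℝ, let m > 0 be an integer, and let U_b = [[a,b],[c,d]] be a unitary 2×2 complex matrix. Suppose Φ : ℤ → ℂ² satisfies U^(s)Φ = Φ, Φ^R(0) = 1, and Φ^L(x) = 0 for all x > m. Then, writing r̃ = Φ^L(0) and t̃ = Φ^R(m), the two relations t̃ = e^{iq(m−1)}(c r̃ + d) and r̃ = b e^{ip(m−1)} t̃ hold; consequently, if 1 − b c e^{i(p+q)(m−1)} ≠ 0, then t̃ = d e^{iq(m−1)}/(1 − b c e^{i(p+q)(m−1)}) and r̃ = b d e^{ip(m−1)} e^{iq(m−1)}/(1 − b c e^{i(p+q)(m−1)}). -/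
open Complex

noncomputable section

/-- One step of the discrete-time quantum walk on `ℤ` with coin entries
`a b c d : ℤ → ℂ`, acting on states `Ψ : ℤ → ℂ × ℂ` (left, right components). -/
def qwStep (a b c d : ℤ → ℂ) (Ψ : ℤ → ℂ × ℂ) : ℤ → ℂ × ℂ :=
  fun x => (a (x + 1) * (Ψ (x + 1)).1 + b (x + 1) * (Ψ (x + 1)).2,
            c (x - 1) * (Ψ (x - 1)).1 + d (x - 1) * (Ψ (x - 1)).2)

/-- Coin entries of the double-barrier walk. -/
def dbA (p : ℝ) (m : ℤ) (a : ℂ) : ℤ → ℂ := fun x => if x = 0 ∨ x = m then a else exp (I * p)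

def dbB (m : ℤ) (b : ℂ) : ℤ → ℂ := fun x => if x = 0 ∨ x = m then b else 0

def dbC (m : ℤ) (c : ℂ) : ℤ → ℂ := fun x => if x = 0 ∨ x = m then c else 0

def dbD (q : ℝ) (m : ℤ) (d : ℂ) : ℤ → ℂ := fun x => if x = 0 ∨ x = m then d else exp (I * q)

theorem stationary_state_rt_relations
    (p q : ℝ) (m : ℤ) (hm : 0 < m) (a b c d : ℂ)
    (hU : !![a, b; c, d] ∈ Matrix.unitaryGroup (Fin 2) ℂ)
    (Φ : ℤ → ℂ × ℂ)
    (hΦ : qwStep (dbA p m a) (dbB m b) (dbC m c) (dbD q m d) Φ = Φ)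
    (h0 : (Φ 0).2 = 1) (hL : ∀ x : ℤ, m < x → (Φ x).1 = 0) :
    (Φ m).2 = exp (I * q * (m - 1)) * (c * (Φ 0).1 + d) ∧
    (Φ 0).1 = b * exp (I * p * (m - 1)) * (Φ m).2 ∧
    (1 - b * c * exp (I * (p + q) * (m - 1)) ≠ 0 →
      (Φ m).2 = d * exp (I * q * (m - 1)) / (1 - b * c * exp (I * (p + q) * (m - 1))) ∧
      (Φ 0).1 = b * d * exp (I * p * (m - 1)) * exp (I * q * (m - 1)) /
        (1 - b * c * exp (I * (p + q) * (m - 1)))) := by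
  have e1 : ∀ x, (Φ x).1 = dbA p m a (x + 1) * (Φ (x + 1)).1 + dbB m b (x + 1) * (Φ (x + 1)).2 :=
    fun x => (congrArg Prod.fst (congrFun hΦ x)).symm
  have e2 : ∀ x, (Φ x).2 = dbC m c (x - 1) * (Φ (x - 1)).1 + dbD q m d (x - 1) * (Φ (x - 1)).2 :=
    fun x => (congrArg Prod.snd (congrFun hΦ x)).symm
  have hLm : (Φ m).1 = 0 := by
    rw [e1 m, hL (m + 1) (by omega)]
    have h : ¬ (m + 1 = 0 ∨ m + 1 = m) := by omega
    simp only [dbB, if_neg h]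
    ring
  have hR : ∀ k : ℕ, 1 + (k : ℤ) ≤ m →
      (Φ (1 + k)).2 = exp (I * q) ^ k * (c * (Φ 0).1 + d) := by
    intro k
    induction k with
    | zero =>
      intro _
      rw [e2]
      simp [dbC, dbD, h0]
    | succ k ih =>
      intro hk
      push_cast at hk
      have ih' := ih (by omega)
      rw [e2]
      have h1 : 1 + ((k + 1 : ℕ) : ℤ) - 1 = 1 + k := by push_cast; ring
      have h : ¬ (1 + (k : ℤ) = 0 ∨ 1 + (k : ℤ) = m) := by omega
      rw [h1, ih']
      simp only [dbC, dbD, if_neg h]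
      ring
  have hLk : ∀ k : ℕ, 1 + (k : ℤ) ≤ m →
      (Φ (m - 1 - k)).1 = exp (I * p) ^ k * (b * (Φ m).2) := by
    intro k
    induction k with
    | zero =>
      intro _
      rw [e1]
      simp [dbA, dbB, hLm]
    | succ k ih =>
      intro hk
      push_cast at hk
      have ih' := ih (by omega)
      rw [e1]
      have h1 : m - 1 - ((k + 1 : ℕ) : ℤ) + 1 = m - 1 - k := by push_cast; ring
      have h : ¬ (m - 1 - (k : ℤ) = 0 ∨ m - 1 - (k : ℤ) = m) := by omega
      rw [h1, ih']
      simp only [dbA, dbB, if_neg h]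
      ring
  obtain ⟨n, hn⟩ := Int.eq_ofNat_of_zero_le (show 0 ≤ m - 1 by omega)
  have hmn : (m : ℂ) - 1 = n := by exact_mod_cast congrArg (Int.cast : ℤ → ℂ) hn
  have hq : exp (I * q * (m - 1)) = exp (I * q) ^ n := by
    rw [hmn, ← Complex.exp_nat_mul]; congr 1; ring
  have hp : exp (I * p * (m - 1)) = exp (I * p) ^ n := by
    rw [hmn, ← Complex.exp_nat_mul]; congr 1; ring
  have hpq : exp (I * (p + q) * (m - 1)) = exp (I * p * (m - 1)) * exp (I * q * (m - 1)) := by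
    rw [← Complex.exp_add]; congr 1; ring
  have A : (Φ m).2 = exp (I * q * (m - 1)) * (c * (Φ 0).1 + d) := by
    have := hR n (by omega)
    rwa [show 1 + (n : ℤ) = m by omega, ← hq] at this
  have B : (Φ 0).1 = b * exp (I * p * (m - 1)) * (Φ m).2 := by
    have := hLk n (by omega)
    rw [show m - 1 - (n : ℤ) = 0 by omega, ← hp] at this
    rw [this]; ring
  refine ⟨A, B, fun hne => ?_⟩
  rw [hpq] at hne ⊢
  generalize exp (I * p * (m - 1)) = P at *
  generalize exp (I * q * (m - 1)) = Q at *
  constructor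
  · rw [eq_div_iff hne]
    linear_combination A + Q * c * B
  · rw [eq_div_iff hne]
    linear_combination B + b * P * A
end
end

section
/- Let p, q ∈ ℝ, let m > 0 be an integer, and let U_b = [[a,b],[c,d]] be a unitary 2×2 complex matrix with a ≠ 0 and d ≠ 0. Then the complex vector space of all states Φ : ℤ → ℂ² satisfying U^(s)Φ = Φ has dimension exactly 2; more precisely, the linear map sending such a stationary state Φ to Φ(0) ∈ ℂ² is a linear isomorphism onto ℂ². In particular, every stationary state is a linear combination of the state corresponding to injection of quantum walkers from the left (normalized by Φ^R(0) = 1, Φ^L(x) = 0 for x > m) and the state corresponding to injection from the right (normalized by Φ̃^L(m) = 1, Φ̃^R(x) = 0 for x < 0). -/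
open Complex

noncomputable section

/-- The quantum walk evolution as a `ℂ`-linear map on states. -/
def qwStepL (a b c d : ℤ → ℂ) : (ℤ → ℂ × ℂ) →ₗ[ℂ] (ℤ → ℂ × ℂ) where
  toFun := qwStep a b c d
  map_add' Ψ Φ := by
    funext x
    simp only [qwStep, Pi.add_apply, Prod.fst_add, Prod.snd_add, Prod.mk_add_mk]
    exact Prod.ext (by ring) (by ring)
  map_smul' r Ψ := by
    funext x
    simp only [qwStep, Pi.smul_apply, Prod.smul_fst, Prod.smul_snd, Prod.smul_mk,
      RingHom.id_apply, smul_eq_mul]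
    exact Prod.ext (by ring) (by ring)

/-- The space of stationary states of the double-barrier walk. -/
def statSpace (p q : ℝ) (m : ℤ) (a b c d : ℂ) : Submodule ℂ (ℤ → ℂ × ℂ) :=
  LinearMap.ker (qwStepL (dbA p m a) (dbB m b) (dbC m c) (dbD q m d) - LinearMap.id)

theorem qw_fix_iff (a b c d : ℤ → ℂ) (Φ : ℤ → ℂ × ℂ) :
    qwStep a b c d Φ = Φ ↔ ∀ x : ℤ,
      (Φ x).1 = a (x + 1) * (Φ (x + 1)).1 + b (x + 1) * (Φ (x + 1)).2 ∧
      (Φ (x + 1)).2 = c x * (Φ x).1 + d x * (Φ x).2 := by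
  constructor
  · intro h x
    have h1 := congrFun h x
    have h2 := congrFun h (x + 1)
    rw [Prod.ext_iff] at h1 h2
    simp only [qwStep, add_sub_cancel_right] at h1 h2
    exact ⟨h1.1.symm, h2.2.symm⟩
  · intro h
    funext x
    have h1 := (h x).1
    have h2 := (h (x - 1)).2
    rw [sub_add_cancel] at h2
    exact Prod.ext h1.symm h2.symm

theorem qw_unique (a b c d : ℤ → ℂ) (ha : ∀ x, a x ≠ 0) (hd : ∀ x, d x ≠ 0)
    (Φ : ℤ → ℂ × ℂ) (h : qwStep a b c d Φ = Φ) (h0 : Φ 0 = 0) : Φ = 0 := by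
  rw [qw_fix_iff] at h
  funext x
  induction x using Int.induction_on with
  | zero => exact h0
  | succ n ih =>
    obtain ⟨h1, h2⟩ := h n
    simp only [ih, Pi.zero_apply, Prod.fst_zero, Prod.snd_zero, mul_zero, add_zero] at h1 h2
    rw [h2, mul_zero, add_zero] at h1
    exact Prod.ext ((mul_eq_zero.1 h1.symm).resolve_left (ha _)) h2
  | pred n ih =>
    obtain ⟨h1, h2⟩ := h (-(n : ℤ) - 1)
    rw [sub_add_cancel] at h1 h2
    simp only [ih, Pi.zero_apply, Prod.fst_zero, Prod.snd_zero, mul_zero, add_zero] at h1 h2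
    rw [h1, mul_zero, zero_add] at h2
    exact Prod.ext h1 ((mul_eq_zero.1 h2.symm).resolve_left (hd _))

/-- Forward transfer from `x` to `x + 1`. -/
def qwFwd (a b c d : ℤ → ℂ) (x : ℤ) (v : ℂ × ℂ) : ℂ × ℂ :=
  ((v.1 - b (x + 1) * (c x * v.1 + d x * v.2)) / a (x + 1), c x * v.1 + d x * v.2)

/-- Backward transfer from `x + 1` to `x`. -/
def qwBwd (a b c d : ℤ → ℂ) (x : ℤ) (v : ℂ × ℂ) : ℂ × ℂ :=
  (a (x + 1) * v.1 + b (x + 1) * v.2,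
    (v.2 - c x * (a (x + 1) * v.1 + b (x + 1) * v.2)) / d x)

/-- The state generated by its value at the origin. -/
def qwGen (a b c d : ℤ → ℂ) (v : ℂ × ℂ) : ℤ → ℂ × ℂ
  | Int.ofNat n => Nat.rec v (fun k w => qwFwd a b c d k w) n
  | Int.negSucc n => Nat.rec (qwBwd a b c d (-1) v)
      (fun k w => qwBwd a b c d (Int.negSucc (k + 1)) w) n

theorem qwGen_fix (a b c d : ℤ → ℂ) (ha : ∀ x, a x ≠ 0) (hd : ∀ x, d x ≠ 0) (v : ℂ × ℂ) :
    qwStep a b c d (qwGen a b c d v) = qwGen a b c d v := by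
  rw [qw_fix_iff]
  have key : ∀ x : ℤ, qwGen a b c d v (x + 1) = qwFwd a b c d x (qwGen a b c d v x) ∨
      qwGen a b c d v x = qwBwd a b c d x (qwGen a b c d v (x + 1)) := by
    intro x
    match x with
    | Int.ofNat n => exact Or.inl rfl
    | Int.negSucc 0 => exact Or.inr rfl
    | Int.negSucc (n + 1) => exact Or.inr rfl
  intro x
  have hax := ha (x + 1)
  have hdx := hd x
  rcases key x with h | h
  · rw [h]
    simp only [qwFwd]
    refine ⟨?_, trivial⟩
    field_simp
    ring
  · rw [h]
    simp only [qwBwd]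
    refine ⟨trivial, ?_⟩
    field_simp
    ring

theorem stationary_states_two_dimensional
    (p q : ℝ) (m : ℤ) (hm : 0 < m) (a b c d : ℂ)
    (hU : !![a, b; c, d] ∈ Matrix.unitaryGroup (Fin 2) ℂ)
    (ha : a ≠ 0) (hd : d ≠ 0) :
    Module.finrank ℂ (statSpace p q m a b c d) = 2 ∧
    (∃ e : statSpace p q m a b c d ≃ₗ[ℂ] ℂ × ℂ,
      ∀ Φ : statSpace p q m a b c d, e Φ = (Φ : ℤ → ℂ × ℂ) 0) ∧
    (∀ Φ Φ₁ Φ₂ : ℤ → ℂ × ℂ,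
      qwStep (dbA p m a) (dbB m b) (dbC m c) (dbD q m d) Φ = Φ →
      qwStep (dbA p m a) (dbB m b) (dbC m c) (dbD q m d) Φ₁ = Φ₁ →
      qwStep (dbA p m a) (dbB m b) (dbC m c) (dbD q m d) Φ₂ = Φ₂ →
      (Φ₁ 0).2 = 1 → (∀ x : ℤ, m < x → (Φ₁ x).1 = 0) →
      (Φ₂ m).1 = 1 → (∀ x : ℤ, x < 0 → (Φ₂ x).2 = 0) →
      ∃ c₁ c₂ : ℂ, Φ = c₁ • Φ₁ + c₂ • Φ₂) := by
  have hA : ∀ x, dbA p m a x ≠ 0 := by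
    intro x
    unfold dbA
    split_ifs
    · exact ha
    · exact exp_ne_zero _
  have hD : ∀ x, dbD q m d x ≠ 0 := by
    intro x
    unfold dbD
    split_ifs
    · exact hd
    · exact exp_ne_zero _
  have hmem : ∀ Φ : ℤ → ℂ × ℂ, Φ ∈ statSpace p q m a b c d ↔
      qwStep (dbA p m a) (dbB m b) (dbC m c) (dbD q m d) Φ = Φ := by
    intro Φ
    unfold statSpace
    rw [LinearMap.mem_ker, LinearMap.sub_apply, sub_eq_zero]
    rfl
  have he : ∃ e : statSpace p q m a b c d ≃ₗ[ℂ] ℂ × ℂ,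
      ∀ Φ : statSpace p q m a b c d, e Φ = (Φ : ℤ → ℂ × ℂ) 0 := by
    let f : statSpace p q m a b c d →ₗ[ℂ] ℂ × ℂ :=
      (LinearMap.proj (0 : ℤ)).comp (statSpace p q m a b c d).subtype
    have hf : Function.Bijective f := by
      constructor
      · rw [← LinearMap.ker_eq_bot, LinearMap.ker_eq_bot']
        intro Φ h0
        exact Subtype.ext (qw_unique _ _ _ _ hA hD Φ.1 ((hmem _).1 Φ.2) h0)
      · intro v
        exact ⟨⟨qwGen _ _ _ _ v, (hmem _).2 (qwGen_fix _ _ _ _ hA hD v)⟩, rfl⟩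
    exact ⟨LinearEquiv.ofBijective f hf, fun Φ => rfl⟩
  refine ⟨?_, he, ?_⟩
  · obtain ⟨e, -⟩ := he
    rw [e.finrank_eq]
    simp
  · intro Φ Φ₁ Φ₂ h h₁ h₂ hR1 _ hL2 hR2
    have hR20 : (Φ₂ 0).2 = 0 := by
      have h3 := ((qw_fix_iff _ _ _ _ _).1 h₂ (-1)).2
      have hc : dbC m c (-1) = 0 := by
        unfold dbC
        rw [if_neg (by omega)]
      rw [hc, hR2 (-1) (by norm_num)] at h3
      simpa using h3
    have hL20 : (Φ₂ 0).1 ≠ 0 := by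
      intro h0
      have := qw_unique _ _ _ _ hA hD Φ₂ h₂ (Prod.ext h0 hR20)
      rw [this] at hL2
      simp at hL2
    refine ⟨(Φ 0).2, ((Φ 0).1 - (Φ 0).2 * (Φ₁ 0).1) / (Φ₂ 0).1, ?_⟩
    rw [← sub_eq_zero]
    apply qw_unique _ _ _ _ hA hD
    · rw [← hmem] at h h₁ h₂ ⊢
      exact Submodule.sub_mem _ h
        (Submodule.add_mem _ (Submodule.smul_mem _ _ h₁) (Submodule.smul_mem _ _ h₂))
    · apply Prod.ext
      · simp only [Pi.sub_apply, Pi.add_apply, Pi.smul_apply, Prod.fst_sub, Prod.fst_add,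
          Prod.smul_fst, smul_eq_mul, Prod.fst_zero]
        field_simp
        ring
      · simp [hR1, hR20]
end
end
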